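/- Let 0 < s ≤ 1, 1 ≤ p < ∞, and d ≥ 2 be such that 1 < sp < d. Then there exists a constant C > 0 depending only on s, p, d, such that for every radial g ∈ C¹_{c,rad}(ℝ^d) and every x ∈ ℝ^d \ {0}: |g(x)| ≤ C |x|^{−(d−sp)/p} ‖g‖_{Ẇ^{s,p}(ℝ^d)}. -/

import Mathlib

open MeasureTheory Real

/-- Homogeneous (fractional) Sobolev seminorm `‖g‖_{Ẇ^{s,p}(ℝ^d)}`:
for `0 < s < 1` the Gagliardo seminorm, for `s = 1` the `L^p` norm of the gradient. -/
noncomputable def sobolevSemi (d : ℕ) (s p : ℝ) (g : EuclideanSpace ℝ (Fin d) → ℝ) : ℝ :=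
  if s = 1 then (∫ x, ‖fderiv ℝ g x‖ ^ p) ^ (1 / p)
  else if s = 0 then (∫ x, |g x| ^ p) ^ (1 / p)
  else (∫ x, ∫ y, |g x - g y| ^ p / ‖x - y‖ ^ ((d : ℝ) + s * p)) ^ (1 / p)

/-!
Write `g x = f ‖x‖` and let `d` be the dimension. The decay comes from the weighted Hölder estimate
`‖f t - f t'‖ ≤ C * t ^ (-(d - 1) / p) * (t' - t) ^ (s - 1 / p) * ‖g‖` for `0 < t < t'`: comparing
`f r` with `f (l * r)`, where `l ^ γ = 2` and `γ = (d - s * p) / p`, it bounds `sup r ^ γ * ‖f r‖`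
by half of itself plus a multiple of `‖g‖`.

For `s = 1` the Hölder estimate is the fundamental theorem of calculus, Jensen's inequality and
polar coordinates. For `s < 1`, restrict the Gagliardo integral to `x` and `y` with radii in two
windows of length `ε * δ` starting at `ρ` and `ρ + δ`, with `y` in a ball of radius `ε * δ / 2`
centred on the ray through `x`. This region bounds
`ρ ^ (d - 1) * δ ^ (1 - s * p) * min ‖f t - f t'‖ ^ p` over the two windows. Moving from the
minimizer to the left endpoints costs `2 * ε ^ (s - 1 / p) * H * δ ^ (s - 1 / p)`, where `H` is the
Hölder constant of `f` far from the origin. Choosing `ε` so that this is half of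
`H * δ ^ (s - 1 / p)`, the cost is absorbed, `H` being finite because `f` is Lipschitz and bounded.
-/

section OneVariable

open Filter Topology Set

variable {F : Type*} [NormedAddCommGroup F]

-- The map `H ↦ H / 2 + A` contracts to its fixed point `2 * A`.
theorem le_two_mul_of_absorb {ι : Type*} {s : Set ι} {a b : ι → ℝ} {H₀ A : ℝ}
    (h₀ : ∀ i ∈ s, a i ≤ H₀ * b i)
    (h : ∀ H, (∀ i ∈ s, a i ≤ H * b i) → ∀ i ∈ s, a i ≤ (H / 2 + A) * b i) :
    ∀ i ∈ s, a i ≤ 2 * A * b i := by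
  have hn : ∀ n : ℕ, ∀ i ∈ s, a i ≤ (2 * A + (H₀ - 2 * A) * (1 / 2) ^ n) * b i := by
    intro n
    induction n with
    | zero => simpa using h₀
    | succ n ih =>
      intro i hi
      exact (h _ ih i hi).trans_eq (by ring)
  have hlim : Tendsto (fun n : ℕ => 2 * A + (H₀ - 2 * A) * (1 / 2) ^ n) atTop (𝓝 (2 * A)) := by
    simpa using ((tendsto_pow_atTop_nhds_zero_of_lt_one one_half_pos.le one_half_lt_one).const_mul
      (H₀ - 2 * A)).const_add (2 * A)
  exact fun i hi => ge_of_tendsto' (hlim.mul_const (b i)) fun n => hn n i hi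

theorem le_mul_rpow_of_mul_rpow_le {K x y m G a b p : ℝ} (hp : 0 < p) (hK : 0 < K) (hx : 0 < x)
    (hy : 0 < y) (hm : 0 ≤ m) (h : K * x ^ a * y ^ b * m ^ p ≤ G) :
    m ≤ K ^ (-(1 / p)) * x ^ (-(a / p)) * y ^ (-(b / p)) * G ^ (1 / p) := by
  have hroot : (K * x ^ a * y ^ b * m ^ p) ^ (1 / p) =
      K ^ (1 / p) * x ^ (a / p) * y ^ (b / p) * m := by
    rw [mul_rpow (by positivity) (by positivity), mul_rpow (by positivity) (by positivity),
      mul_rpow (by positivity) (by positivity), ← rpow_mul hx.le, ← rpow_mul hy.le,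
      ← rpow_mul hm, mul_one_div_cancel hp.ne', rpow_one, mul_one_div, mul_one_div]
  rw [rpow_neg hK.le, rpow_neg hx.le, rpow_neg hy.le, ← mul_inv, ← mul_inv, inv_mul_eq_div,
    le_div_iff₀ (by positivity), mul_comm m, ← hroot]
  gcongr

theorem norm_le_mul_rpow_of_norm_sub_le {f : ℝ → F} (hf : Continuous f)
    (hc : HasCompactSupport f) {A α β : ℝ} (hαβ : α < β)
    (h : ∀ t t', 0 < t → t < t' → ‖f t - f t'‖ ≤ A * t ^ (-β) * (t' - t) ^ α)
    {r : ℝ} (hr : 0 < r) :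
    ‖f r‖ ≤ 2 * (((2 : ℝ) ^ (1 / (β - α)) - 1) ^ α * A) * r ^ (-(β - α)) := by
  have hγ : 0 < β - α := sub_pos.2 hαβ
  set l : ℝ := 2 ^ (1 / (β - α))
  have hl : 1 < l := one_lt_rpow one_lt_two (by positivity)
  have hlγ : l ^ (-(β - α)) = 1 / 2 := by
    rw [← rpow_mul zero_le_two, mul_neg, one_div_mul_cancel hγ.ne', rpow_neg_one, one_div]
  obtain ⟨H₀, hH₀⟩ : ∃ H₀, ∀ t : ℝ, ‖|t| ^ (β - α) * ‖f t‖‖ ≤ H₀ :=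
    (hc.norm.mul_left (f := fun t : ℝ => |t| ^ (β - α))).exists_bound_of_continuous
      ((continuous_abs.rpow_const fun _ => .inr hγ.le).mul hf.norm)
  refine le_two_mul_of_absorb (s := Ioi 0) (a := fun t => ‖f t‖) (b := fun t => t ^ (-(β - α)))
    (H₀ := H₀) (fun t (ht : 0 < t) => ?_) (fun H hH t (ht : 0 < t) => ?_) r hr
  · rw [rpow_neg ht.le, ← div_eq_mul_inv, le_div_iff₀ (by positivity), mul_comm]
    simpa [abs_of_pos ht, abs_of_nonneg (rpow_nonneg ht.le _)] using hH₀ t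
  · have hlt : t < l * t := lt_mul_of_one_lt_left ht hl
    calc ‖f t‖ ≤ ‖f (l * t)‖ + ‖f t - f (l * t)‖ := norm_le_insert' _ _
      _ ≤ H * (l * t) ^ (-(β - α)) + A * t ^ (-β) * (l * t - t) ^ α :=
        add_le_add (hH _ (ht.trans hlt)) (h t _ ht hlt)
      _ = H * (l * t) ^ (-(β - α)) + A * t ^ (-β) * ((l - 1) * t) ^ α := by rw [sub_one_mul]
      _ = (H / 2 + (l - 1) ^ α * A) * t ^ (-(β - α)) := by
        rw [mul_rpow (by positivity) ht.le, hlγ, mul_rpow (sub_pos.2 hl).le ht.le,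
          show -(β - α) = -β + α by ring, rpow_add ht]
        ring

theorem norm_sub_le_of_exists_windows {f : ℝ → F} {R ε A : ℝ} {C₀ α : NNReal}
    (hf : HolderOnWith C₀ α f (Ici R)) (hα : 0 < α) (hε : 0 < ε) (hεα : ε ^ (α : ℝ) = 1 / 4)
    (hwin : ∀ ρ ≥ R, ∀ δ > 0, ∃ t ∈ Icc ρ (ρ + ε * δ), ∃ t' ∈ Icc (ρ + δ) (ρ + δ + ε * δ),
      ‖f t - f t'‖ ≤ A * δ ^ (α : ℝ))
    {t t' : ℝ} (ht : R ≤ t) (htt' : t ≤ t') :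
    ‖f t - f t'‖ ≤ 2 * A * (t' - t) ^ (α : ℝ) := by
  refine le_two_mul_of_absorb (s := {z : ℝ × ℝ | R ≤ z.1 ∧ z.1 ≤ z.2})
    (a := fun z => ‖f z.1 - f z.2‖) (b := fun z => (z.2 - z.1) ^ (α : ℝ)) (H₀ := C₀)
    ?_ ?_ (t, t') ⟨ht, htt'⟩
  · rintro ⟨x, y⟩ ⟨hx : R ≤ x, hxy : x ≤ y⟩
    simpa [dist_eq_norm, Real.dist_eq, abs_sub_comm x, abs_of_nonneg (sub_nonneg.2 hxy)]
      using hf.dist_le hx (hx.trans hxy)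
  · rintro H hH ⟨ρ, y⟩ ⟨hρ : R ≤ ρ, hρy : ρ ≤ y⟩
    obtain ⟨δ, rfl⟩ : ∃ δ, y = ρ + δ := ⟨y - ρ, by ring⟩
    simp only [add_sub_cancel_left]
    rcases (le_add_iff_nonneg_right ρ).1 hρy |>.eq_or_lt with rfl | hδ
    · simp [hα.ne']
    have hH0 : 0 ≤ H := by
      have : ‖f ρ - f (ρ + δ)‖ ≤ H * δ ^ (α : ℝ) := by simpa using hH (ρ, ρ + δ) ⟨hρ, hρy⟩
      exact nonneg_of_mul_nonneg_left ((norm_nonneg _).trans this) (by positivity)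
    have hwindow : ∀ x ≥ R, ∀ z ∈ Icc x (x + ε * δ), ‖f x - f z‖ ≤ H / 4 * δ ^ (α : ℝ) := by
      rintro x hx z ⟨hxz, hzx⟩
      calc ‖f x - f z‖ ≤ H * (z - x) ^ (α : ℝ) := hH (x, z) ⟨hx, hxz⟩
        _ ≤ H * (ε * δ) ^ (α : ℝ) := by
          gcongr
          linarith
        _ = H / 4 * δ ^ (α : ℝ) := by
          rw [mul_rpow hε.le hδ.le, hεα]
          ring
    obtain ⟨z, hz, z', hz', hzz'⟩ := hwin ρ hρ δ hδ
    have hfz := hwindow ρ hρ z hz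
    have hfz' := hwindow (ρ + δ) (hρ.trans hρy) z' hz'
    rw [norm_sub_rev] at hfz'
    calc ‖f ρ - f (ρ + δ)‖ ≤ ‖f ρ - f z‖ + ‖f z - f z'‖ + ‖f z' - f (ρ + δ)‖ := by
          simpa only [dist_eq_norm] using dist_triangle4 (f ρ) (f z) (f z') (f (ρ + δ))
      _ ≤ (H / 2 + A) * δ ^ (α : ℝ) := by linarith

theorem exists_holderWith_of_lipschitzWith_of_hasCompactSupport {X : Type*} [PseudoMetricSpace X]
    {f : X → F} {L : NNReal} (hf : LipschitzWith L f) (hc : HasCompactSupport f) {α : NNReal}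
    (hα : α ≤ 1) : ∃ C, HolderWith C α f := by
  obtain ⟨B, hB⟩ := hc.exists_bound_of_continuous hf.continuous
  have h0 : HolderWith (2 * B.toNNReal) 0 f := by
    intro x y
    have hxy : nndist (f x) (f y) ≤ 2 * B.toNNReal := by
      have hBx : ‖f x‖₊ ≤ B.toNNReal := NNReal.le_toNNReal_of_coe_le (hB x)
      have hBy : ‖f y‖₊ ≤ B.toNNReal := NNReal.le_toNNReal_of_coe_le (hB y)
      rw [nndist_eq_nnnorm, two_mul]
      exact (nnnorm_sub_le _ _).trans (add_le_add hBx hBy)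
    rw [edist_nndist, NNReal.coe_zero, ENNReal.rpow_zero, mul_one]
    exact mod_cast hxy
  exact ⟨_, h0.of_le_of_le (holderWith_one.2 hf) zero_le hα⟩

theorem norm_sub_rpow_le_integral_norm_deriv [NormedSpace ℝ F] {f : ℝ → F} (hf : ContDiff ℝ 1 f)
    {p : ℝ} (hp : 1 ≤ p) {t t' : ℝ} (htt' : t < t') :
    ‖f t - f t'‖ ^ p ≤ (t' - t) ^ (p - 1) * ∫ r in Ioc t t', ‖deriv f r‖ ^ p := by
  have hδ : 0 < t' - t := sub_pos.2 htt'
  have hf' : Continuous fun r => ‖deriv f r‖ := (hf.continuous_deriv le_rfl).norm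
  have hsub : ‖f t - f t'‖ ≤ ∫ r in Ioc t t', ‖deriv f r‖ := by
    rw [norm_sub_rev, ← intervalIntegral.integral_of_le htt'.le]
    exact norm_sub_le_integral_of_norm_deriv_le_of_le htt'.le hf.continuous.continuousOn
      (hf.differentiable one_ne_zero).differentiableOn (.of_forall fun _ _ => le_rfl)
      (hf'.intervalIntegrable _ _)
  have hjensen : ((t' - t)⁻¹ * ∫ r in Ioc t t', ‖deriv f r‖) ^ p ≤
      (t' - t)⁻¹ * ∫ r in Ioc t t', ‖deriv f r‖ ^ p := by
    have := (convexOn_rpow hp).map_set_average_le (μ := volume) (t := Ioc t t')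
      (continuousOn_id.rpow_const fun _ _ => .inr (by linarith)) isClosed_Ici
      (by simpa using htt') (by simp) (.of_forall fun r => norm_nonneg (deriv f r))
      hf'.integrableOn_Ioc (hf'.rpow_const fun _ => .inr (by linarith)).integrableOn_Ioc
    simpa [setAverage_eq, htt'.le] using this
  calc ‖f t - f t'‖ ^ p ≤ (∫ r in Ioc t t', ‖deriv f r‖) ^ p := by gcongr
    _ = (t' - t) ^ p * ((t' - t)⁻¹ * ∫ r in Ioc t t', ‖deriv f r‖) ^ p := by
      rw [← mul_rpow hδ.le (by positivity), mul_inv_cancel_left₀ hδ.ne']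
    _ ≤ (t' - t) ^ p * ((t' - t)⁻¹ * ∫ r in Ioc t t', ‖deriv f r‖ ^ p) := by gcongr
    _ = (t' - t) ^ (p - 1) * ∫ r in Ioc t t', ‖deriv f r‖ ^ p := by
      rw [← mul_assoc, ← div_eq_mul_inv, rpow_sub_one hδ.ne']

end OneVariable

section Gagliardo

open Metric Module Set

variable {E F : Type*} [NormedAddCommGroup E] [NormedAddCommGroup F]

theorem norm_sub_rpow_div_le_mul_min {g : E → F} {L : NNReal} {B p : ℝ} (hg : LipschitzWith L g)
    (hB : ∀ x, ‖g x‖ ≤ B) (hp : 0 < p) (q : ℝ) (x y : E) :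
    ‖g x - g y‖ ^ p / ‖x - y‖ ^ q ≤
      (L ^ p + (2 * B) ^ p) * min (‖x - y‖ ^ (p - q)) (‖x - y‖ ^ (-q)) := by
  have hB0 : 0 ≤ B := (norm_nonneg _).trans (hB x)
  rcases eq_or_ne x y with rfl | hxy
  · rw [sub_self, norm_zero, zero_rpow hp.ne', zero_div]
    positivity
  have hr : 0 < ‖x - y‖ := norm_sub_pos_iff.2 hxy
  have hnear : ‖g x - g y‖ ^ p / ‖x - y‖ ^ q ≤ L ^ p * ‖x - y‖ ^ (p - q) := by
    rw [rpow_sub hr, ← mul_div_assoc, ← mul_rpow L.coe_nonneg hr.le]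
    gcongr
    exact hg.norm_sub_le x y
  have hfar : ‖g x - g y‖ ^ p / ‖x - y‖ ^ q ≤ (2 * B) ^ p * ‖x - y‖ ^ (-q) := by
    rw [rpow_neg hr.le, ← div_eq_mul_inv]
    gcongr
    exact (norm_sub_le_of_le (hB x) (hB y)).trans_eq (two_mul B).symm
  rw [mul_min_of_nonneg _ _ (by positivity)]
  refine le_min (hnear.trans ?_) (hfar.trans ?_) <;> gcongr
  · exact le_add_of_nonneg_right (by positivity)
  · exact le_add_of_nonneg_left (by positivity)

variable [NormedSpace ℝ E] [FiniteDimensional ℝ E] [MeasurableSpace E] [BorelSpace E]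
  (μ : Measure E) [μ.IsAddHaarMeasure]

theorem integrable_min_norm_rpow [Nontrivial E] {a b : ℝ} (ha : -(finrank ℝ E : ℝ) < a)
    (hb : b < -(finrank ℝ E : ℝ)) : Integrable (fun x : E => min (‖x‖ ^ a) (‖x‖ ^ b)) μ := by
  have hpow (c : ℝ) {r : ℝ} (hr : 0 < r) :
      r ^ (finrank ℝ E - 1) * r ^ c = r ^ ((finrank ℝ E : ℝ) - 1 + c) := by
    rw [rpow_add hr, ← Nat.cast_pred finrank_pos, rpow_natCast]
  rw [integrable_fun_norm_addHaar μ (f := fun r => min (r ^ a) (r ^ b)),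
    ← Ioc_union_Ioi_eq_Ioi zero_le_one]
  refine IntegrableOn.union ?_ ?_
  · refine IntegrableOn.congr_fun (intervalIntegral.intervalIntegrable_rpow' (a := 0) (b := 1)
      (r := finrank ℝ E - 1 + a) (by linarith)).1 (fun r hr => ?_) measurableSet_Ioc
    simp only [smul_eq_mul, min_eq_left
      (rpow_le_rpow_of_exponent_ge hr.1 hr.2 (hb.trans ha).le), hpow a hr.1]
  · refine (integrableOn_Ioi_rpow_of_lt (a := finrank ℝ E - 1 + b) (by linarith)
      zero_lt_one).congr_fun (fun r (hr : 1 < r) => ?_) measurableSet_Ioi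
    simp only [smul_eq_mul, min_eq_right
      (rpow_le_rpow_of_exponent_le hr.le (hb.trans ha).le), hpow b (one_pos.trans hr)]

variable {g : E → F} {L : NNReal} {p q : ℝ}

theorem integrable_norm_sub_rpow_div [Nontrivial E] (hg : LipschitzWith L g)
    (hc : HasCompactSupport g) (hp : 0 < p) (hq : finrank ℝ E < q) (hqp : q < finrank ℝ E + p)
    (x : E) : Integrable (fun y => ‖g x - g y‖ ^ p / ‖x - y‖ ^ q) μ := by
  obtain ⟨B, hB⟩ := hc.exists_bound_of_continuous hg.continuous
  have hk := integrable_min_norm_rpow μ (a := p - q) (b := -q) (by linarith) (by linarith)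
  have hm : Measurable fun y => ‖g x - g y‖ := (continuous_const.sub hg.continuous).norm.measurable
  refine ((hk.comp_sub_left x).const_mul (L ^ p + (2 * B) ^ p)).mono'
    (Measurable.aestronglyMeasurable (by fun_prop)) (.of_forall fun y => ?_)
  rw [norm_of_nonneg (by positivity)]
  exact norm_sub_rpow_div_le_mul_min hg hB hp q x y

theorem integrable_prod_norm_sub_rpow_div [Nontrivial E] (hg : LipschitzWith L g)
    (hc : HasCompactSupport g) (hp : 0 < p) (hq : finrank ℝ E < q)
    (hqp : q < finrank ℝ E + p) :
    Integrable (fun z : E × E => ‖g z.1 - g z.2‖ ^ p / ‖z.1 - z.2‖ ^ q) (μ.prod μ) := by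
  obtain ⟨B, hB⟩ := hc.exists_bound_of_continuous hg.continuous
  have hB0 : 0 ≤ B := (norm_nonneg _).trans (hB 0)
  set k : E → ℝ := fun x => min (‖x‖ ^ (p - q)) (‖x‖ ^ (-q))
  set χ : E → ℝ := (tsupport g).indicator 1
  have hχ : Integrable χ μ :=
    (integrable_indicator_iff hc.measurableSet).2 (integrableOn_const hc.measure_lt_top.ne)
  have hint : Integrable (fun z : E × E => χ z.2 * k (z.1 - z.2)) (μ.prod μ) :=
    hχ.convolution_integrand (ContinuousLinearMap.mul ℝ ℝ)
      (integrable_min_norm_rpow μ (by linarith) (by linarith))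
  have hm : Measurable fun z : E × E => ‖g z.1 - g z.2‖ :=
    ((hg.continuous.comp continuous_fst).sub (hg.continuous.comp continuous_snd)).norm.measurable
  refine ((hint.add hint.swap).const_mul (L ^ p + (2 * B) ^ p)).mono'
    (Measurable.aestronglyMeasurable (by fun_prop)) (.of_forall fun z => ?_)
  simp only [Pi.add_apply, Function.comp_apply, Prod.fst_swap, Prod.snd_swap]
  have hk : 0 ≤ k (z.1 - z.2) := by positivity
  have hk' : k (z.2 - z.1) = k (z.1 - z.2) := by simp only [k, norm_sub_rev z.2]
  rw [norm_of_nonneg (by positivity), hk', ← add_mul]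
  by_cases hz : z.1 ∈ tsupport g ∨ z.2 ∈ tsupport g
  · have hχz : 1 ≤ χ z.2 + χ z.1 := by
      have hχ0 (x : E) : 0 ≤ χ x := indicator_nonneg (fun _ _ => zero_le_one) x
      rcases hz with hz | hz
      · simpa [χ, hz] using hχ0 z.2
      · simpa [χ, hz] using hχ0 z.1
    refine (norm_sub_rpow_div_le_mul_min hg hB hp q z.1 z.2).trans ?_
    gcongr
    exact le_mul_of_one_le_left hk hχz
  · rw [not_or] at hz
    simp [χ, hz, image_eq_zero_of_notMem_tsupport hz.1, image_eq_zero_of_notMem_tsupport hz.2,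
      zero_rpow hp.ne']

variable {μ}

theorem mul_setIntegral_Ioc_le_integral [Nontrivial E] {φ : E → ℝ} (hφ : Integrable φ μ)
    (hφ0 : 0 ≤ φ) {h : ℝ → ℝ} (hm : Measurable h) (h0 : 0 ≤ h) {t t' : ℝ} (ht : 0 ≤ t)
    (hle : ∀ x, ‖x‖ ∈ Ioc t t' → h ‖x‖ ≤ φ x) :
    finrank ℝ E * μ.real (ball 0 1) * t ^ (finrank ℝ E - 1) * ∫ r in Ioc t t', h r ≤
      ∫ x, φ x ∂μ := by
  set k : ℝ → ℝ := (Ioc t t').indicator h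
  have hk0 (r : ℝ) : 0 ≤ k r := indicator_nonneg (fun r _ => h0 r) r
  have hkφ (x : E) : k ‖x‖ ≤ φ x :=
    indicator_apply_le' (fun hx => hle x hx) fun _ => hφ0 x
  have hk : Integrable (fun x : E => k ‖x‖) μ := by
    refine hφ.mono' ((hm.indicator measurableSet_Ioc).comp measurable_norm).aestronglyMeasurable
      (.of_forall fun x => ?_)
    rw [norm_of_nonneg (hk0 _)]
    exact hkφ x
  have hmono : t ^ (finrank ℝ E - 1) * ∫ r in Ioc t t', h r ≤
      ∫ r in Ioi (0 : ℝ), r ^ (finrank ℝ E - 1) • k r := by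
    rw [← inter_eq_right.2 (Ioc_subset_Ioi_self.trans (Ioi_subset_Ioi ht)),
      ← setIntegral_indicator measurableSet_Ioc, ← integral_const_mul]
    refine integral_mono_of_nonneg (.of_forall fun r => mul_nonneg (by positivity) (hk0 r))
      ((integrable_fun_norm_addHaar μ).1 hk) (.of_forall fun r => ?_)
    by_cases hr : r ∈ Ioc t t'
    · exact mul_le_mul_of_nonneg_right (pow_le_pow_left₀ ht hr.1.le _) (hk0 r)
    · simp [k, hr]
  calc _ = finrank ℝ E * (μ.real (ball 0 1) *
        (t ^ (finrank ℝ E - 1) * ∫ r in Ioc t t', h r)) := by ring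
    _ ≤ finrank ℝ E * (μ.real (ball 0 1) *
        ∫ r in Ioi (0 : ℝ), r ^ (finrank ℝ E - 1) • k r) := by gcongr
    _ = ∫ x : E, k ‖x‖ ∂μ := by
      rw [integral_fun_norm_addHaar μ k, nsmul_eq_mul, smul_eq_mul]
    _ ≤ ∫ x, φ x ∂μ := integral_mono hk hφ hkφ

theorem mul_measureReal_closedBall_le_integral {φ : E → ℝ} (hφ : Integrable φ μ) (hφ0 : 0 ≤ φ)
    {a r : ℝ} (hr : 0 ≤ r) {c : E} (ha : ∀ x ∈ closedBall c r, a ≤ φ x) :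
    a * (r ^ finrank ℝ E * μ.real (ball 0 1)) ≤ ∫ x, φ x ∂μ := by
  rw [← Measure.addHaar_real_closedBall μ c hr]
  exact (setIntegral_ge_of_const_le_real isClosed_closedBall.measurableSet
    measure_closedBall_lt_top.ne ha hφ.integrableOn).trans
    (setIntegral_le_integral hφ (.of_forall hφ0))

end Gagliardo

section Radial

open Metric Module Set

variable {E F : Type*} [NormedAddCommGroup E] [NormedAddCommGroup F]

theorem lipschitzWith_comp_norm {f : ℝ → F} {L : NNReal} (hf : LipschitzWith L f) :
    LipschitzWith L fun x : E => f ‖x‖ :=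
  mul_one L ▸ hf.comp lipschitzWith_one_norm

theorem hasCompactSupport_comp_norm [ProperSpace E] {f : ℝ → F} (hf : HasCompactSupport f) :
    HasCompactSupport fun x : E => f ‖x‖ := by
  obtain ⟨R, -, hR⟩ := hf.exists_pos_le_norm
  refine .intro (isCompact_closedBall 0 R) fun x hx => hR _ ?_
  rw [norm_norm]
  exact (not_le.1 fun h => hx (mem_closedBall_zero_iff.2 h)).le

variable [NormedSpace ℝ E]

theorem exists_norm_eq_and_norm_sub_eq {x : E} (hx : x ≠ 0) {R : ℝ} (hR : 0 ≤ R) :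
    ∃ c : E, ‖c‖ = R ∧ ‖x - c‖ = |‖x‖ - R| := by
  have hx0 : ‖x‖ ≠ 0 := norm_ne_zero_iff.2 hx
  refine ⟨(R / ‖x‖) • x, ?_, ?_⟩
  · rw [norm_smul, norm_div, norm_norm, div_mul_cancel₀ _ hx0, norm_of_nonneg hR]
  · rw [show x - (R / ‖x‖) • x = ((‖x‖ - R) / ‖x‖) • x by
        rw [sub_div, div_self hx0, sub_smul, one_smul],
      norm_smul, norm_div, norm_norm, div_mul_cancel₀ _ hx0, Real.norm_eq_abs]

theorem exists_contDiff_profile [NormedSpace ℝ F] [Nontrivial E] {n : WithTop ℕ∞} {g : E → F}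
    (hrad : ∀ x y, ‖x‖ = ‖y‖ → g x = g y) (hg : ContDiff ℝ n g) (hc : HasCompactSupport g) :
    ∃ f : ℝ → F, ContDiff ℝ n f ∧ HasCompactSupport f ∧ g = fun x => f ‖x‖ := by
  obtain ⟨e, he⟩ := exists_norm_eq E zero_le_one
  have he0 : e ≠ 0 := norm_ne_zero_iff.1 (he.trans_ne one_ne_zero)
  refine ⟨fun r => g (r • e), hg.comp (contDiff_id.smul contDiff_const),
    hc.comp_isClosedEmbedding (isClosedEmbedding_smul_left he0), funext fun x => hrad _ _ ?_⟩
  rw [norm_smul, he, mul_one, norm_norm]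

theorem norm_deriv_le_norm_fderiv_comp_norm [NormedSpace ℝ F] {f : ℝ → F} {x : E} (hx : x ≠ 0)
    (hf : DifferentiableAt ℝ (fun y : E => f ‖y‖) x) :
    ‖deriv f ‖x‖‖ ≤ ‖fderiv ℝ (fun y : E => f ‖y‖) x‖ := by
  have hx0 : 0 < ‖x‖ := norm_pos_iff.2 hx
  set u : E := ‖x‖⁻¹ • x
  have hu : ‖u‖ = 1 := norm_smul_inv_norm (𝕜 := ℝ) hx
  have hux : ‖x‖ • u = x := smul_inv_smul₀ hx0.ne' x
  have hray : HasDerivAt (fun r : ℝ => r • u) u ‖x‖ := by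
    simpa using (hasDerivAt_id ‖x‖).smul_const u
  have hfderiv : HasFDerivAt (fun y : E => f ‖y‖) (fderiv ℝ (fun y : E => f ‖y‖) x) (‖x‖ • u) := by
    rw [hux]
    exact hf.hasFDerivAt
  have hcomp := hfderiv.comp_hasDerivAt ‖x‖ hray
  have heq : f =ᶠ[nhds ‖x‖] fun r => f ‖r • u‖ := by
    filter_upwards [lt_mem_nhds hx0] with r hr
    rw [norm_smul, hu, mul_one, norm_of_nonneg hr.le]
  rw [(hcomp.congr_of_eventuallyEq heq).deriv]
  simpa [hu] using (fderiv ℝ (fun y : E => f ‖y‖) x).le_opNorm u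

variable [FiniteDimensional ℝ E] [Nontrivial E] [MeasurableSpace E] [BorelSpace E]
  {μ : Measure E} [μ.IsAddHaarMeasure] {f : ℝ → F} {L : NNReal} {p q ρ δ h m : ℝ}

theorem mul_le_integral_norm_sub_rpow_div_of_windows (hf : LipschitzWith L f)
    (hc : HasCompactSupport f) (hp : 0 < p) (hq : finrank ℝ E < q) (hqp : q < finrank ℝ E + p)
    (hρ : 0 ≤ ρ) (hh : 0 < h) (hδ : h < δ) (hm : 0 ≤ m)
    (hwin : ∀ t ∈ Icc ρ (ρ + h), ∀ t' ∈ Icc (ρ + δ) (ρ + δ + h), m ≤ ‖f t - f t'‖)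
    {x : E} (hx : ‖x‖ ∈ Ioc ρ (ρ + h)) :
    m ^ p / (2 * δ) ^ q * ((h / 2) ^ finrank ℝ E * μ.real (ball 0 1)) ≤
      ∫ y, ‖f ‖x‖ - f ‖y‖‖ ^ p / ‖x - y‖ ^ q ∂μ := by
  have hx0 : x ≠ 0 := norm_pos_iff.1 (hρ.trans_lt hx.1)
  have hq0 : 0 ≤ q := (Nat.cast_nonneg _).trans hq.le
  obtain ⟨c, hcn, hxc⟩ := exists_norm_eq_and_norm_sub_eq hx0 (R := ρ + δ + h / 2) (by linarith)
  rw [abs_of_nonpos (by linarith [hx.2])] at hxc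
  refine mul_measureReal_closedBall_le_integral (c := c)
    (integrable_norm_sub_rpow_div μ (lipschitzWith_comp_norm hf)
      (hasCompactSupport_comp_norm hc) hp hq hqp x)
    (fun y => by positivity) (by linarith) fun y hy => ?_
  rw [mem_closedBall_iff_norm] at hy
  have hyn := abs_le.1 ((abs_norm_sub_norm_le y c).trans hy)
  have hxy : 0 < ‖x - y‖ := by
    have := norm_sub_norm_le y x
    rw [norm_sub_rev] at this
    linarith [hx.2]
  have hxy' : ‖x - y‖ ≤ 2 * δ := by
    have := norm_sub_le_norm_sub_add_norm_sub x c y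
    rw [norm_sub_rev c y] at this
    linarith [hx.1]
  have hmy : m ≤ ‖f ‖x‖ - f ‖y‖‖ :=
    hwin _ (Ioc_subset_Icc_self hx) _ ⟨by linarith, by linarith⟩
  gcongr

theorem mul_le_integral_integral_norm_sub_rpow_div_of_windows (hf : LipschitzWith L f)
    (hc : HasCompactSupport f) (hp : 0 < p) (hq : finrank ℝ E < q) (hqp : q < finrank ℝ E + p)
    (hρ : 0 ≤ ρ) (hh : 0 < h) (hδ : h < δ) (hm : 0 ≤ m)
    (hwin : ∀ t ∈ Icc ρ (ρ + h), ∀ t' ∈ Icc (ρ + δ) (ρ + δ + h), m ≤ ‖f t - f t'‖) :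
    finrank ℝ E * μ.real (ball 0 1) * ρ ^ (finrank ℝ E - 1) *
        (h * (m ^ p / (2 * δ) ^ q * ((h / 2) ^ finrank ℝ E * μ.real (ball 0 1)))) ≤
      ∫ x, ∫ y, ‖f ‖x‖ - f ‖y‖‖ ^ p / ‖x - y‖ ^ q ∂μ ∂μ := by
  have hδ0 : 0 < δ := hh.trans hδ
  have hint := (integrable_prod_norm_sub_rpow_div μ
    (lipschitzWith_comp_norm hf) (hasCompactSupport_comp_norm hc)
    hp hq hqp).integral_prod_left
  simpa [hh.le] using mul_setIntegral_Ioc_le_integral hint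
    (fun x => integral_nonneg fun y => by positivity) measurable_const
    (fun _ => by positivity) hρ
    fun x hx => mul_le_integral_norm_sub_rpow_div_of_windows hf hc hp hq hqp hρ hh hδ hm hwin hx

theorem mul_setIntegral_norm_deriv_le_integral_norm_fderiv [NormedSpace ℝ F] (hf : ContDiff ℝ 1 f)
    (hc : HasCompactSupport f) (hg : ContDiff ℝ 1 fun x : E => f ‖x‖) (hp : 0 < p) {t t' : ℝ}
    (ht : 0 ≤ t) :
    finrank ℝ E * μ.real (ball 0 1) * t ^ (finrank ℝ E - 1) *
        ∫ r in Ioc t t', ‖deriv f r‖ ^ p ≤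
      ∫ x, ‖fderiv ℝ (fun x : E => f ‖x‖) x‖ ^ p ∂μ := by
  have hgc : HasCompactSupport fun x : E => f ‖x‖ := hasCompactSupport_comp_norm hc
  have hint : Integrable (fun x => ‖fderiv ℝ (fun x : E => f ‖x‖) x‖ ^ p) μ :=
    Continuous.integrable_of_hasCompactSupport
      ((hg.continuous_fderiv one_ne_zero).norm.rpow_const fun _ => .inr hp.le)
      ((hgc.fderiv ℝ).norm.comp_left (g := fun r : ℝ => r ^ p) (zero_rpow hp.ne'))
  have hm : Measurable fun r => ‖deriv f r‖ ^ p :=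
    ((hf.continuous_deriv le_rfl).norm.rpow_const fun _ => .inr hp.le).measurable
  refine mul_setIntegral_Ioc_le_integral hint (fun _ => by positivity) hm
    (fun _ => by positivity) ht fun x hx => ?_
  gcongr
  exact norm_deriv_le_norm_fderiv_comp_norm (norm_pos_iff.1 (ht.trans_lt hx.1))
    (hg.differentiable one_ne_zero x)

end Radial

section Seminorm

open Metric Module Set

variable {E F : Type*} [NormedAddCommGroup E] [NormedSpace ℝ E] [MeasurableSpace E]
  [NormedAddCommGroup F] [NormedSpace ℝ F]

/-- The homogeneous Sobolev seminorm `‖g‖_{Ẇ^{s,p}}` of a vector-valued function on a normed space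
equipped with a measure, extending `sobolevSemi`. It is the Gagliardo seminorm for every `s ≠ 1`, so
that the value at `s = 0` differs from that of `sobolevSemi`. -/
noncomputable def homogeneousSobolevSeminorm (μ : Measure E) (s p : ℝ) (g : E → F) : ℝ :=
  (if s = 1 then ∫ x, ‖fderiv ℝ g x‖ ^ p ∂μ
    else ∫ x, ∫ y, ‖g x - g y‖ ^ p / ‖x - y‖ ^ ((finrank ℝ E : ℝ) + s * p) ∂μ ∂μ) ^ (1 / p)

theorem sobolevSemi_eq_homogeneousSobolevSeminorm {d : ℕ} {s : ℝ} (hs : s ≠ 0) (p : ℝ)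
    (g : EuclideanSpace ℝ (Fin d) → ℝ) :
    sobolevSemi d s p g = homogeneousSobolevSeminorm volume s p g := by
  by_cases h : s = 1 <;> simp [sobolevSemi, homogeneousSobolevSeminorm, hs, h]

theorem homogeneousSobolevSeminorm_nonneg (μ : Measure E) (s p : ℝ) (g : E → F) :
    0 ≤ homogeneousSobolevSeminorm μ s p g := by
  unfold homogeneousSobolevSeminorm
  split_ifs <;> positivity

variable [FiniteDimensional ℝ E] [Nontrivial E] [BorelSpace E] (μ : Measure E) [μ.IsAddHaarMeasure]

theorem exists_windows_norm_sub_le_mul_homogeneousSobolevSeminorm {s p ε : ℝ} (hs0 : 0 < s)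
    (hs1 : s < 1) (hp : 0 < p) (hε0 : 0 < ε) (hε1 : ε < 1) :
    ∃ C > 0, ∀ (f : ℝ → F) (L : NNReal), LipschitzWith L f → HasCompactSupport f →
      ∀ ρ > 0, ∀ δ > 0, ∃ t ∈ Icc ρ (ρ + ε * δ), ∃ t' ∈ Icc (ρ + δ) (ρ + δ + ε * δ),
        ‖f t - f t'‖ ≤ C * ρ ^ (-(((finrank ℝ E : ℝ) - 1) / p)) * δ ^ (s - 1 / p) *
          homogeneousSobolevSeminorm μ s p fun x : E => f ‖x‖ := by
  set d := finrank ℝ E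
  set ω := μ.real (ball (0 : E) 1)
  have hd : 0 < d := finrank_pos
  have hω : 0 < ω :=
    ENNReal.toReal_pos (measure_ball_pos μ _ one_pos).ne' measure_ball_lt_top.ne
  set K : ℝ := d * ω ^ 2 * ε * 2 ^ (-(d + s * p)) * (ε / 2) ^ d with hK
  refine ⟨K ^ (-(1 / p)), by positivity, fun f L hf hc ρ hρ δ hδ => ?_⟩
  have hεδ : 0 < ε * δ := by positivity
  have hne : (Icc ρ (ρ + ε * δ) ×ˢ Icc (ρ + δ) (ρ + δ + ε * δ)).Nonempty :=
    (nonempty_Icc.2 (by linarith)).prod (nonempty_Icc.2 (by linarith))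
  obtain ⟨⟨t, t'⟩, ⟨ht, ht'⟩, hmin⟩ := (isCompact_Icc.prod isCompact_Icc).exists_isMinOn hne
    (f := fun z : ℝ × ℝ => ‖f z.1 - f z.2‖)
    ((hf.continuous.comp continuous_fst).sub (hf.continuous.comp continuous_snd)).norm.continuousOn
  refine ⟨t, ht, t', ht', ?_⟩
  have hwin := mul_le_integral_integral_norm_sub_rpow_div_of_windows (E := E) (μ := μ) hf hc hp
    (q := d + s * p) (lt_add_of_pos_right _ (by positivity)) (by gcongr; nlinarith) hρ.le hεδ
    (by nlinarith) (norm_nonneg _) fun r hr r' hr' => hmin (mk_mem_prod hr hr')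
  have hK' : K * ρ ^ ((d : ℝ) - 1) * δ ^ (1 - s * p) * ‖f t - f t'‖ ^ p =
      d * ω * ρ ^ (d - 1) * (ε * δ * (‖f t - f t'‖ ^ p / (2 * δ) ^ (d + s * p) *
        ((ε * δ / 2) ^ d * ω))) := by
    have hδpow : δ ^ (1 - s * p) = δ ^ (-(d + s * p)) * δ ^ d * δ := by
      rw [← rpow_natCast, ← rpow_add hδ, ← rpow_add_one hδ.ne']
      congr 1
      ring
    rw [hδpow, hK, ← Nat.cast_pred hd, rpow_natCast, div_eq_mul_inv (‖f t - f t'‖ ^ p),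
      ← rpow_neg (by positivity), mul_rpow zero_le_two hδ.le, mul_div_right_comm, mul_pow]
    ring
  have hroot := le_mul_rpow_of_mul_rpow_le hp (by positivity) hρ hδ (norm_nonneg _)
    (hK'.trans_le hwin)
  rw [homogeneousSobolevSeminorm, if_neg hs1.ne]
  convert hroot using 4
  field_simp
  ring

theorem exists_norm_sub_le_mul_homogeneousSobolevSeminorm_of_lt_one {s p : ℝ} (hs1 : s < 1)
    (hp : 0 < p) (hsp : 1 < s * p) :
    ∃ C > 0, ∀ (f : ℝ → F) (L : NNReal), LipschitzWith L f → HasCompactSupport f →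
      ∀ t t', 0 < t → t < t' →
        ‖f t - f t'‖ ≤ C * t ^ (-(((finrank ℝ E : ℝ) - 1) / p)) * (t' - t) ^ (s - 1 / p) *
          homogeneousSobolevSeminorm μ s p fun x : E => f ‖x‖ := by
  have hs0 : 0 < s := pos_of_mul_pos_left (one_pos.trans hsp) hp.le
  have hα : 0 < s - 1 / p := sub_pos.2 ((div_lt_iff₀ hp).2 hsp)
  set α : NNReal := ⟨s - 1 / p, hα.le⟩
  have hα1 : α ≤ 1 := by
    have : 0 < 1 / p := by positivity
    exact NNReal.coe_le_coe.1 (show s - 1 / p ≤ 1 by linarith)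
  set ε : ℝ := (1 / 4) ^ (1 / (s - 1 / p))
  have hε0 : 0 < ε := by positivity
  have hεα : ε ^ (s - 1 / p) = 1 / 4 := by
    rw [← rpow_mul (by norm_num), one_div_mul_cancel hα.ne', rpow_one]
  obtain ⟨C, hC, hwin⟩ := exists_windows_norm_sub_le_mul_homogeneousSobolevSeminorm (F := F) μ
    hs0 hs1 hp hε0 (rpow_lt_one (by norm_num) (by norm_num) (by positivity))
  refine ⟨2 * C, by positivity, fun f L hf hc t t' ht htt' => ?_⟩
  obtain ⟨C₀, hC₀⟩ := exists_holderWith_of_lipschitzWith_of_hasCompactSupport hf hc hα1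
  set S := homogeneousSobolevSeminorm μ s p fun x : E => f ‖x‖
  have hS : 0 ≤ S := homogeneousSobolevSeminorm_nonneg _ _ _ _
  have hd : (1 : ℝ) ≤ finrank ℝ E := Nat.one_le_cast.2 finrank_pos
  refine (norm_sub_le_of_exists_windows (A := C * t ^ (-(((finrank ℝ E : ℝ) - 1) / p)) * S)
    (hC₀.holderOnWith _) hα hε0 hεα (fun ρ hρ δ hδ => ?_) le_rfl htt'.le).trans_eq ?_
  · obtain ⟨r, hr, r', hr', hrr'⟩ := hwin f L hf hc ρ (ht.trans_le hρ) δ hδ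
    refine ⟨r, hr, r', hr', hrr'.trans ?_⟩
    rw [mul_right_comm _ _ S]
    gcongr C * ?_ * S * _
    exact rpow_le_rpow_of_nonpos ht hρ (neg_nonpos.2 (div_nonneg (sub_nonneg.2 hd) hp.le))
  · rw [show (α : ℝ) = s - 1 / p from rfl]
    ring

theorem exists_norm_sub_le_mul_homogeneousSobolevSeminorm_one {p : ℝ} (hp : 1 ≤ p) :
    ∃ C > 0, ∀ f : ℝ → F, ContDiff ℝ 1 f → HasCompactSupport f →
      ContDiff ℝ 1 (fun x : E => f ‖x‖) → ∀ t t', 0 < t → t < t' →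
        ‖f t - f t'‖ ≤ C * t ^ (-(((finrank ℝ E : ℝ) - 1) / p)) * (t' - t) ^ (1 - 1 / p) *
          homogeneousSobolevSeminorm μ 1 p fun x : E => f ‖x‖ := by
  set d := finrank ℝ E
  set ω := μ.real (ball (0 : E) 1)
  have hp0 : 0 < p := by linarith
  have hd : 0 < d := finrank_pos
  have hω : 0 < ω :=
    ENNReal.toReal_pos (measure_ball_pos μ _ one_pos).ne' measure_ball_lt_top.ne
  refine ⟨(d * ω) ^ (-(1 / p)), by positivity, fun f hf hc hg t t' ht htt' => ?_⟩
  have hδ : 0 < t' - t := sub_pos.2 htt'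
  have hroot := le_mul_rpow_of_mul_rpow_le (a := (d : ℝ) - 1) (b := 1 - p) hp0
    (show 0 < d * ω by positivity) ht hδ (norm_nonneg (f t - f t')) <| by
    calc d * ω * t ^ ((d : ℝ) - 1) * (t' - t) ^ (1 - p) * ‖f t - f t'‖ ^ p
        ≤ d * ω * t ^ ((d : ℝ) - 1) * (t' - t) ^ (1 - p) *
          ((t' - t) ^ (p - 1) * ∫ r in Ioc t t', ‖deriv f r‖ ^ p) := by
          gcongr
          exact norm_sub_rpow_le_integral_norm_deriv hf hp htt'
      _ = d * ω * t ^ (d - 1) * ∫ r in Ioc t t', ‖deriv f r‖ ^ p := by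
          rw [mul_assoc _ ((t' - t) ^ (1 - p)), ← mul_assoc ((t' - t) ^ (1 - p)), ← rpow_add hδ,
            show 1 - p + (p - 1) = 0 by ring, rpow_zero, one_mul, ← Nat.cast_pred hd, rpow_natCast]
      _ ≤ _ := mul_setIntegral_norm_deriv_le_integral_norm_fderiv hf hc hg hp0 ht.le
  rw [homogeneousSobolevSeminorm, if_pos rfl]
  convert hroot using 4
  field_simp
  ring

theorem exists_norm_sub_le_mul_homogeneousSobolevSeminorm {s p : ℝ} (hp : 0 < p) (hs1 : s ≤ 1)
    (hsp : 1 < s * p) :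
    ∃ C > 0, ∀ f : ℝ → F, ContDiff ℝ 1 f → HasCompactSupport f →
      ContDiff ℝ 1 (fun x : E => f ‖x‖) → ∀ t t', 0 < t → t < t' →
        ‖f t - f t'‖ ≤ C * t ^ (-(((finrank ℝ E : ℝ) - 1) / p)) * (t' - t) ^ (s - 1 / p) *
          homogeneousSobolevSeminorm μ s p fun x : E => f ‖x‖ := by
  rcases hs1.eq_or_lt with rfl | hs1
  · exact exists_norm_sub_le_mul_homogeneousSobolevSeminorm_one μ (by linarith)
  · obtain ⟨C, hC, hHolder⟩ :=
      exists_norm_sub_le_mul_homogeneousSobolevSeminorm_of_lt_one (F := F) μ hs1 hp hsp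
    refine ⟨C, hC, fun f hf hc _ => ?_⟩
    obtain ⟨L, hL⟩ := hf.lipschitzWith_of_hasCompactSupport hc one_ne_zero
    exact hHolder f L hL hc

end Seminorm

theorem stmt11_general {E F : Type*} [NormedAddCommGroup E] [NormedSpace ℝ E]
    [FiniteDimensional ℝ E] [MeasurableSpace E] [BorelSpace E] [NormedAddCommGroup F]
    [NormedSpace ℝ F] (μ : Measure E) [μ.IsAddHaarMeasure] {s p : ℝ} (hp : 0 < p) (hs1 : s ≤ 1)
    (hsp1 : 1 < s * p) (hspd : s * p < Module.finrank ℝ E) :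
    ∃ C > 0, ∀ g : E → F, (∀ x y, ‖x‖ = ‖y‖ → g x = g y) → ContDiff ℝ 1 g →
      HasCompactSupport g → ∀ x ≠ 0, ‖g x‖ ≤
        C * ‖x‖ ^ (-((Module.finrank ℝ E - s * p) / p)) * homogeneousSobolevSeminorm μ s p g := by
  set d := (Module.finrank ℝ E : ℝ)
  have : Nontrivial E := Module.nontrivial_of_finrank_pos (R := ℝ)
    (Nat.cast_pos.1 (by linarith : (0 : ℝ) < d))
  obtain ⟨C, hC, hHolder⟩ :=
    exists_norm_sub_le_mul_homogeneousSobolevSeminorm (F := F) μ hp hs1 hsp1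
  have hαβ : (d - 1) / p - (s - 1 / p) = (d - s * p) / p := by
    field_simp
    ring
  have hγ : 0 < (d - s * p) / p := div_pos (sub_pos.2 hspd) hp
  refine ⟨2 * ((2 ^ (1 / ((d - s * p) / p)) - 1) ^ (s - 1 / p) * C), ?_,
    fun g hrad hg hc x hx => ?_⟩
  · have : (1 : ℝ) < 2 ^ (1 / ((d - s * p) / p)) := one_lt_rpow one_lt_two (by positivity)
    have := sub_pos.2 this
    positivity
  obtain ⟨f, hf, hfc, rfl⟩ := exists_contDiff_profile hrad hg hc
  have hdecay := norm_le_mul_rpow_of_norm_sub_le (α := s - 1 / p) (β := (d - 1) / p)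
    (A := C * homogeneousSobolevSeminorm μ s p fun x : E => f ‖x‖) hf.continuous hfc
    (sub_pos.1 (hαβ ▸ hγ))
    (fun t t' ht htt' => (hHolder f hf hfc hg t t' ht htt').trans_eq (by ring)) (norm_pos_iff.2 hx)
  rw [hαβ] at hdecay
  exact hdecay.trans_eq (by ring)

theorem stmt11 (d : ℕ) (hd : 2 ≤ d) (s p : ℝ)
    (hs0 : 0 < s) (hs1 : s ≤ 1) (hp1 : 1 ≤ p) (hsp1 : 1 < s * p) (hspd : s * p < d) :
    ∃ C > 0, ∀ g : EuclideanSpace ℝ (Fin d) → ℝ,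
      (∀ x y : EuclideanSpace ℝ (Fin d), ‖x‖ = ‖y‖ → g x = g y) →
      ContDiff ℝ 1 g → HasCompactSupport g →
      ∀ x : EuclideanSpace ℝ (Fin d), x ≠ 0 →
        |g x| ≤ C * ‖x‖ ^ (-(((d : ℝ) - s * p) / p)) * sobolevSemi d s p g := by
  simpa [sobolevSemi_eq_homogeneousSobolevSeminorm hs0.ne'] using
    stmt11_general (E := EuclideanSpace ℝ (Fin d)) (F := ℝ) volume (one_pos.trans_le hp1) hs1 hsp1
      (by simpa using hspd)
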